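/- Suppose (d−1)/2 ≤ α ≤ (d+1)/2 (and α < d). Then for every β with 0 < β < (d−1)/2 there exists a constant C_β such that for every μ ∈ M_d and every R > 1, ∫_{B^{d−1}(0,1)} |μ̂(R(ξ, ⟨Mξ,ξ⟩))|² √(1+4|ξ|²) dξ ≤ C_β · R^{−β} · I_α(μ). (Equivalently, β(α, H_m^{d−1}) ≥ (d−1)/2 on this range.) -/

import Mathlib

open MeasureTheory Metric
open scoped ENNReal NNReal

noncomputable section

/-- The quadratic form `⟨Mξ, ξ⟩` on `ℝ^{d-1}`, where the diagonal matrix `M` has its first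
`d-1-m` diagonal entries equal to `+1` and its last `m` diagonal entries equal to `-1`. -/
def hypQ (d m : ℕ) (ξ : EuclideanSpace ℝ (Fin (d - 1))) : ℝ :=
  ∑ i : Fin (d - 1), (if (i : ℕ) < d - 1 - m then (1 : ℝ) else -1) * ξ i ^ 2

/-- The point `(ξ, ⟨Mξ, ξ⟩) ∈ ℝ^d` on the hyperbolic paraboloid. -/
def hypLift (d m : ℕ) (ξ : EuclideanSpace ℝ (Fin (d - 1))) : EuclideanSpace ℝ (Fin d) :=
  (EuclideanSpace.equiv (Fin d) ℝ).symm
    (fun i => if h : (i : ℕ) < d - 1 then ξ ⟨i, h⟩ else hypQ d m ξ)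

/-- The Fourier transform `μ̂(ζ) = ∫ e^{-i x·ζ} dμ(x)` of a measure on `ℝ^d`. -/
def ftM {d : ℕ} (μ : Measure (EuclideanSpace ℝ (Fin d))) (ζ : EuclideanSpace ℝ (Fin d)) : ℂ :=
  ∫ x, Complex.exp (-(Complex.I * (((∑ i, x i * ζ i) : ℝ) : ℂ))) ∂μ

/-- The `α`-dimensional energy `I_α(μ) = ∬ |x-y|^{-α} dμ(x) dμ(y)`. -/
def energy {d : ℕ} (α : ℝ) (μ : Measure (EuclideanSpace ℝ (Fin d))) : ℝ≥0∞ :=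
  ∫⁻ x, ∫⁻ y, ENNReal.ofReal (dist x y) ^ (-α) ∂μ ∂μ

/-- The hyperbolic average `∫_{B^{d-1}(0,1)} |μ̂(R(ξ,⟨Mξ,ξ⟩))|² √(1+4|ξ|²) dξ`. -/
def hypAvg (d m : ℕ) (μ : Measure (EuclideanSpace ℝ (Fin d))) (R : ℝ) : ℝ :=
  ∫ ξ in ball (0 : EuclideanSpace ℝ (Fin (d - 1))) 1,
    ‖ftM μ (R • hypLift d m ξ)‖ ^ 2 * Real.sqrt (1 + 4 * ‖ξ‖ ^ 2)

/-- The decay estimate `∫_H |μ̂(Rξ)|² dσ(ξ) ≤ C R^{-β} I_α(μ)` holds with some constant `C`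
uniformly over measures in `M_d` and all `R > 1`. -/
def decayBound (d m : ℕ) (α β : ℝ) : Prop :=
  ∃ C : ℝ, 0 < C ∧ ∀ μ : Measure (EuclideanSpace ℝ (Fin d)), IsFiniteMeasure μ →
    μ ((closedBall 0 1)ᶜ) = 0 → ∀ R : ℝ, 1 < R →
    ENNReal.ofReal (hypAvg d m μ R) ≤ ENNReal.ofReal (C * R ^ (-β)) * energy α μ

/-- The decay estimate with exponent `β` fails for every constant `C > 0`: there is a measure
in `M_d` with finite positive `α`-energy and an `R > 1` violating the estimate. -/
def decayFails (d m : ℕ) (α β : ℝ) : Prop :=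
  ∀ C : ℝ, 0 < C → ∃ μ : Measure (EuclideanSpace ℝ (Fin d)), IsFiniteMeasure μ ∧
    μ ((closedBall 0 1)ᶜ) = 0 ∧ 0 < energy α μ ∧ energy α μ ≠ ⊤ ∧
    ∃ R : ℝ, 1 < R ∧ C * R ^ (-β) * (energy α μ).toReal < hypAvg d m μ R

/-!
With `μ̃` the reflection of `μ`, `|μ̂|²` is the Fourier transform of `μ ∗ μ̃`, so Fubini gives
`∫ |μ̂|² dν = ∬ ν̂ (x - y) dμ(x) dμ(y)` for every finite measure `ν`. Hence a decay
`|ν̂ w| ≲ |w|^{-a}` yields `∫ |μ̂(R ζ)|² dν(ζ) ≲ R^{-a} I_a(μ)`, and `I_a(μ) ≲ I_α(μ)` for `a ≤ α`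
when `μ` has bounded support. The surface measure is dominated by the image `ν` of `e^{-|ξ|²} dξ` on
the full hyperbolic paraboloid, whose Fourier transform is an explicit complex Gaussian integral:
since all coefficients of the quadratic form have modulus one, it decays with `a = (d-1)/2`.
-/

/-! ### Fourier decay and energies -/

lemma ennreal_rpow_neg_le_mul_rpow_neg {x D : ℝ≥0∞} (hD : D ≠ 0) (hD' : D ≠ ∞) (hx : x ≤ D)
    {a b : ℝ} (hab : a ≤ b) : x ^ (-a) ≤ D ^ (b - a) * x ^ (-b) := by
  have hscale (p : ℝ) : x ^ (-p) = D ^ (-p) * (x / D) ^ (-p) := by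
    rw [← ENNReal.mul_rpow_of_ne_top hD' (ENNReal.div_ne_top (ne_top_of_le_ne_top hD' hx) hD),
      ENNReal.mul_div_cancel hD hD']
  rw [hscale a, hscale b, ← mul_assoc, ← ENNReal.rpow_add _ _ hD hD',
    show b - a + -b = -a by ring]
  gcongr _ * ?_
  exact ENNReal.rpow_le_rpow_of_exponent_ge (ENNReal.div_le_of_le_mul (by rwa [one_mul]))
    (neg_le_neg hab)

lemma enorm_charFun_map_smul_sub_le {E : Type*} [NormedAddCommGroup E] [InnerProductSpace ℝ E]
    [MeasurableSpace E] [BorelSpace E] {ν : Measure E} {C : ℝ≥0∞} {a α D R : ℝ} {x y : E}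
    (hν : ∀ w, ‖charFun ν w‖ₑ ≤ C * ‖w‖ₑ ^ (-a)) (ha : a ≤ α) (hD : 0 < D) (hR : 0 ≤ R)
    (hxy : dist x y ≤ D) :
    ‖charFun (ν.map (R • ·)) (x - y)‖ₑ ≤
      C * ENNReal.ofReal R ^ (-a) * ENNReal.ofReal D ^ (α - a) * edist x y ^ (-α) := by
  calc ‖charFun (ν.map (R • ·)) (x - y)‖ₑ
      ≤ C * ‖R • (x - y)‖ₑ ^ (-a) := by rw [charFun_map_smul]; exact hν _
    _ = C * ENNReal.ofReal R ^ (-a) * edist x y ^ (-a) := by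
      rw [enorm_smul, ENNReal.mul_rpow_of_ne_top enorm_ne_top enorm_ne_top,
        Real.enorm_of_nonneg hR, ← edist_eq_enorm_sub, mul_assoc]
    _ ≤ C * ENNReal.ofReal R ^ (-a) * (ENNReal.ofReal D ^ (α - a) * edist x y ^ (-α)) := by
      gcongr
      refine ennreal_rpow_neg_le_mul_rpow_neg (by simpa using hD) ENNReal.ofReal_ne_top ?_ ha
      rw [edist_dist]
      gcongr
    _ = C * ENNReal.ofReal R ^ (-a) * ENNReal.ofReal D ^ (α - a) * edist x y ^ (-α) :=
      (mul_assoc _ _ _).symm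

section FourierDecay

variable {E : Type*} [NormedAddCommGroup E] [InnerProductSpace ℝ E] [SecondCountableTopology E]
  [MeasurableSpace E] [BorelSpace E] (μ ν : Measure E) [IsFiniteMeasure μ] [IsFiniteMeasure ν]

lemma integral_charFun_comm : ∫ x, charFun μ x ∂ν = ∫ x, charFun ν x ∂μ := by
  simp only [charFun_apply]
  rw [integral_integral_swap]
  · simp only [real_inner_comm]
  · refine (integrable_const (1 : ℝ)).mono' (by fun_prop) (.of_forall fun p => ?_)
    exact (Complex.norm_exp_ofReal_mul_I _).le

lemma charFun_conv_map_neg (t : E) :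
    charFun (μ ∗ μ.map (- ·)) t = ((‖charFun μ t‖ ^ 2 : ℝ) : ℂ) := by
  have hneg : charFun (μ.map (- ·)) t = charFun μ (-t) := by
    simpa using charFun_map_smul (μ := μ) (-1) t
  rw [charFun_conv, hneg, charFun_neg, Complex.mul_conj', Complex.ofReal_pow]

lemma integrable_norm_charFun_sq : Integrable (fun ζ => ‖charFun μ ζ‖ ^ 2) ν := by
  refine (integrable_const (μ.real Set.univ ^ 2)).mono' (by fun_prop) (.of_forall fun ζ => ?_)
  rw [norm_pow, norm_norm]
  gcongr
  exact norm_charFun_le ζ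

theorem lintegral_enorm_charFun_sq_le :
    ∫⁻ ζ, ‖charFun μ ζ‖ₑ ^ 2 ∂ν ≤ ∫⁻ x, ∫⁻ y, ‖charFun ν (x - y)‖ₑ ∂μ ∂μ := by
  have hmeas : Measurable fun w => ‖charFun ν w‖ₑ := by fun_prop
  calc ∫⁻ ζ, ‖charFun μ ζ‖ₑ ^ 2 ∂ν
      = ENNReal.ofReal (∫ ζ, ‖charFun μ ζ‖ ^ 2 ∂ν) := by
        rw [ofReal_integral_eq_lintegral_ofReal (integrable_norm_charFun_sq μ ν)
          (.of_forall fun ζ => sq_nonneg _)]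
        simp only [ENNReal.ofReal_pow (norm_nonneg _), ofReal_norm]
    _ = ‖∫ ζ, charFun (μ ∗ μ.map (- ·)) ζ ∂ν‖ₑ := by
        simp only [charFun_conv_map_neg]
        rw [integral_complex_ofReal, ← ofReal_norm, Complex.norm_real, Real.norm_of_nonneg]
        exact integral_nonneg fun ζ => sq_nonneg _
    _ ≤ ∫⁻ w, ‖charFun ν w‖ₑ ∂(μ ∗ μ.map (- ·)) := by
        rw [integral_charFun_comm]
        exact enorm_integral_le_lintegral_enorm _
    _ = ∫⁻ x, ∫⁻ y, ‖charFun ν (x - y)‖ₑ ∂μ ∂μ := by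
        rw [Measure.lintegral_conv hmeas]
        congr with x
        rw [lintegral_map (by fun_prop) measurable_neg]
        simp only [sub_eq_add_neg]

variable {μ ν}

theorem lintegral_enorm_charFun_smul_sq_le_of_decay {C : ℝ≥0∞} {a α r R : ℝ} {c : E}
    (hν : ∀ w, ‖charFun ν w‖ₑ ≤ C * ‖w‖ₑ ^ (-a)) (hμ : ∀ᵐ x ∂μ, x ∈ closedBall c r)
    (ha : a ≤ α) (hr : 0 < r) (hR : 0 < R) :
    ∫⁻ ζ, ‖charFun μ (R • ζ)‖ₑ ^ 2 ∂ν ≤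
      C * ENNReal.ofReal R ^ (-a) * ENNReal.ofReal (2 * r) ^ (α - a) *
        ∫⁻ x, ∫⁻ y, edist x y ^ (-α) ∂μ ∂μ := by
  calc ∫⁻ ζ, ‖charFun μ (R • ζ)‖ₑ ^ 2 ∂ν
      = ∫⁻ ζ, ‖charFun μ ζ‖ₑ ^ 2 ∂(ν.map (R • ·)) := by
        rw [lintegral_map (by fun_prop) (by fun_prop)]
    _ ≤ ∫⁻ x, ∫⁻ y, ‖charFun (ν.map (R • ·)) (x - y)‖ₑ ∂μ ∂μ := lintegral_enorm_charFun_sq_le _ _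
    _ ≤ ∫⁻ x, ∫⁻ y, C * ENNReal.ofReal R ^ (-a) * ENNReal.ofReal (2 * r) ^ (α - a) *
          edist x y ^ (-α) ∂μ ∂μ := by
        refine lintegral_mono_ae (hμ.mono fun x hx => lintegral_mono_ae (hμ.mono fun y hy => ?_))
        refine enorm_charFun_map_smul_sub_le hν ha (by positivity) hR.le ?_
        linarith [dist_triangle_right x y c, mem_closedBall.1 hx, mem_closedBall.1 hy]
    _ = _ := by
        have hmeas : Measurable fun p : E × E => edist p.1 p.2 ^ (-α) :=
          measurable_edist.pow_const _
        have hmeas_right (x : E) : Measurable fun y => edist x y ^ (-α) :=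
          hmeas.comp measurable_prodMk_left
        simp only [lintegral_const_mul _ (hmeas_right _)]
        exact lintegral_const_mul _ hmeas.lintegral_prod_right'

end FourierDecay

/-! ### Gaussian integrals with a quadratic phase -/

lemma exp_neg_mul_le_div_one_add_rpow {c k p s : ℝ} (hk : 1 ≤ k) (hp : 0 ≤ p) (hpk : p ≤ c * k)
    (hs : 0 ≤ s) : Real.exp (-(c * s)) ≤ (k / (1 + s)) ^ p := by
  have hk₀ : 0 < k := by linarith
  have hbase : Real.exp (-(s / k)) ≤ k / (1 + s) := by
    rw [Real.exp_neg, ← one_div, div_le_div_iff₀ (Real.exp_pos _) (by positivity)]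
    calc 1 * (1 + s) ≤ k * (s / k + 1) := by field_simp; linarith
      _ ≤ k * Real.exp (s / k) := by gcongr; exact Real.add_one_le_exp _
  calc Real.exp (-(c * s)) ≤ Real.exp (-(s / k) * p) := by
        rw [Real.exp_le_exp, neg_mul, neg_le_neg_iff, div_mul_eq_mul_div, div_le_iff₀ hk₀]
        nlinarith
    _ = Real.exp (-(s / k)) ^ p := Real.exp_mul _ _
    _ ≤ (k / (1 + s)) ^ p := by gcongr

lemma norm_gaussian_integral_factor (b z : ℝ) :
    ‖((Real.pi : ℂ) / (1 - Complex.I * b)) ^ (1 / 2 : ℂ) *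
        Complex.exp ((Complex.I * z) ^ 2 / (4 * (1 - Complex.I * b)))‖ =
      (Real.pi ^ 2 / (1 + b ^ 2)) ^ (1 / 4 : ℝ) * Real.exp (-(1 / 4 * (z ^ 2 / (1 + b ^ 2)))) := by
  have hre : (1 - Complex.I * b).re = 1 := by simp
  have him : (1 - Complex.I * b).im = -b := by simp
  have hsq : Complex.normSq (1 - Complex.I * b) = 1 + b ^ 2 := by
    rw [Complex.normSq_apply, hre, him]
    ring
  rw [norm_mul, Complex.norm_exp]
  congr 1
  · rw [show (1 / 2 : ℂ) = ((1 / 2 : ℝ) : ℂ) by push_cast; rfl, Complex.norm_cpow_real, ← hsq,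
      Complex.normSq_eq_norm_sq, norm_div, Complex.norm_real, Real.norm_of_nonneg Real.pi_pos.le,
      ← div_pow, ← Real.rpow_natCast_mul (by positivity)]
    norm_num
  · have hexponent : (Complex.I * z) ^ 2 / (4 * (1 - Complex.I * b)) =
        ((-(z ^ 2 / 4) : ℝ) : ℂ) * (1 - Complex.I * b)⁻¹ := by
      rw [mul_pow, Complex.I_sq, div_eq_mul_inv, mul_inv]
      push_cast
      ring
    rw [hexponent, Complex.re_ofReal_mul, Complex.inv_re, hre, hsq]
    congr 1
    ring

theorem norm_integral_cexp_quadratic_phase_le {ι : Type*} [Fintype ι] {b z : ι → ℝ} {τ : ℝ}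
    (hτ : 0 ≤ τ) (hb : ∀ i, b i ^ 2 = τ) :
    ‖∫ v : ι → ℝ, Complex.exp
        (-∑ i, (1 - Complex.I * b i) * (v i : ℂ) ^ 2 + ∑ i, (Complex.I * z i) * v i)‖ ≤
      (Real.pi ^ 2 * (Fintype.card ι + 1) / (1 + (∑ i, z i ^ 2 + τ))) ^
        ((Fintype.card ι : ℝ) / 4) := by
  set n : ℝ := (Fintype.card ι : ℝ)
  set s : ℝ := (∑ i, z i ^ 2) / (1 + τ) with hs
  have hs₀ : 0 ≤ s := div_nonneg (Finset.sum_nonneg fun i _ => sq_nonneg _) (by positivity)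
  rw [GaussianFourier.integral_cexp_neg_sum_mul_add (by simp), norm_prod]
  simp only [norm_gaussian_integral_factor, hb]
  calc ∏ i, (Real.pi ^ 2 / (1 + τ)) ^ (1 / 4 : ℝ) * Real.exp (-(1 / 4 * (z i ^ 2 / (1 + τ))))
      = (Real.pi ^ 2 / (1 + τ)) ^ (n / 4) * Real.exp (-(1 / 4 * s)) := by
        rw [Finset.prod_mul_distrib, Finset.prod_const, ← Real.exp_sum, Finset.card_univ,
          ← Real.rpow_mul_natCast (by positivity), Finset.sum_neg_distrib, ← Finset.mul_sum,
          ← Finset.sum_div, one_div_mul_eq_div]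
    _ ≤ (Real.pi ^ 2 / (1 + τ)) ^ (n / 4) * ((n + 1) / (1 + s)) ^ (n / 4) := by
        gcongr
        exact exp_neg_mul_le_div_one_add_rpow (by simp [n]) (by positivity) (by linarith) hs₀
    _ = (Real.pi ^ 2 * (n + 1) / (1 + (∑ i, z i ^ 2 + τ))) ^ (n / 4) := by
        rw [← Real.mul_rpow (by positivity) (by positivity), div_mul_div_comm]
        congr 2
        rw [hs]
        field_simp
        ring

lemma ofReal_div_one_add_sq_rpow_le {K r q : ℝ} (hK : 0 ≤ K) (hr : 0 ≤ r) (hq : 0 ≤ q) :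
    ENNReal.ofReal ((K / (1 + r ^ 2)) ^ q) ≤
      ENNReal.ofReal (K ^ q) * ENNReal.ofReal r ^ (-(2 * q)) := by
  have hpow : ENNReal.ofReal r ^ (2 * q) ≤ ENNReal.ofReal ((1 + r ^ 2) ^ q) := by
    rw [ENNReal.ofReal_rpow_of_nonneg hr (by positivity), Real.rpow_mul hr, Real.rpow_two]
    gcongr
    linarith
  rw [Real.div_rpow hK (by positivity), ENNReal.ofReal_div_of_pos (by positivity),
    ENNReal.rpow_neg, div_eq_mul_inv]
  gcongr

lemma integrable_exp_neg_norm_sq {ι : Type*} [Fintype ι] :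
    Integrable fun ξ : EuclideanSpace ℝ ι => Real.exp (-‖ξ‖ ^ 2) := by
  have h := (GaussianFourier.integrable_cexp_neg_mul_sq_norm_add (V := EuclideanSpace ℝ ι)
    (b := 1) (by simp) 0 0).norm
  simpa [Complex.norm_exp, ← Complex.ofReal_pow] using h

/-! ### The Gaussian measure on the hyperbolic paraboloid -/

/-- The image on the untruncated hyperbolic paraboloid of the measure `e^{-|ξ|²} dξ`: a majorant of
the surface measure, up to a constant, with an explicit Fourier transform. -/
def gaussianHyp (d m : ℕ) : Measure (EuclideanSpace ℝ (Fin d)) :=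
  (volume.withDensity fun ξ => ENNReal.ofReal (Real.exp (-‖ξ‖ ^ 2))).map (hypLift d m)

@[fun_prop]
lemma continuous_hypLift (d m : ℕ) : Continuous (hypLift d m) := by
  refine (EuclideanSpace.equiv (Fin d) ℝ).symm.continuous.comp (continuous_pi fun i => ?_)
  unfold hypQ
  split_ifs <;> fun_prop

instance (d m : ℕ) : IsFiniteMeasure (gaussianHyp d m) := by
  have := isFiniteMeasure_withDensity_ofReal
    (integrable_exp_neg_norm_sq (ι := Fin (d - 1))).hasFiniteIntegral
  unfold gaussianHyp
  infer_instance

lemma lintegral_gaussianHyp (d m : ℕ) {f : EuclideanSpace ℝ (Fin d) → ℝ≥0∞} (hf : Measurable f) :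
    ∫⁻ ζ, f ζ ∂gaussianHyp d m =
      ∫⁻ ξ, ENNReal.ofReal (Real.exp (-‖ξ‖ ^ 2)) * f (hypLift d m ξ) := by
  have hcomp : Measurable fun ξ => f (hypLift d m ξ) := by fun_prop
  rw [gaussianHyp, lintegral_map hf (by fun_prop),
    lintegral_withDensity_eq_lintegral_mul _ (by fun_prop) hcomp]
  rfl

lemma inner_hypLift (n m : ℕ) (ξ : EuclideanSpace ℝ (Fin n)) (w : EuclideanSpace ℝ (Fin (n + 1))) :
    inner ℝ (hypLift (n + 1) m ξ) w = ∑ i : Fin n, (w i.castSucc * ξ i +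
      w (Fin.last n) * (if (i : ℕ) < n - m then (1 : ℝ) else -1) * ξ i ^ 2) := by
  rw [PiLp.inner_apply, Fin.sum_univ_castSucc, Finset.sum_add_distrib]
  simp [hypLift, hypQ, Finset.mul_sum]

lemma charFun_gaussianHyp (n m : ℕ) (w : EuclideanSpace ℝ (Fin (n + 1))) :
    charFun (gaussianHyp (n + 1) m) w = ∫ v : Fin n → ℝ, Complex.exp
      (-∑ i : Fin n, (1 - Complex.I * ((w (Fin.last n) *
          (if (i : ℕ) < n - m then (1 : ℝ) else -1) : ℝ) : ℂ)) * (v i : ℂ) ^ 2 +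
        ∑ i : Fin n, (Complex.I * (w i.castSucc : ℝ)) * v i) := by
  have hLp := (EuclideanSpace.volume_preserving_symm_measurableEquiv_toLp (Fin n)).symm
  calc charFun (gaussianHyp (n + 1) m) w
      = ∫ ξ : EuclideanSpace ℝ (Fin n),
          Real.exp (-‖ξ‖ ^ 2) • Complex.exp (inner ℝ (hypLift (n + 1) m ξ) w * Complex.I) := by
        rw [charFun_apply, gaussianHyp, integral_map (by fun_prop) (by fun_prop),
          integral_withDensity_eq_integral_toReal_smul (by fun_prop) (by simp)]
        simp only [ENNReal.toReal_ofReal (Real.exp_pos _).le]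
        rfl
    _ = ∫ v : Fin n → ℝ, Real.exp (-‖WithLp.toLp 2 v‖ ^ 2) •
          Complex.exp (inner ℝ (hypLift (n + 1) m (WithLp.toLp 2 v)) w * Complex.I) :=
        (hLp.integral_comp' _).symm
    _ = _ := by
        congr with v
        rw [inner_hypLift, EuclideanSpace.norm_sq_eq, Complex.real_smul, Complex.ofReal_exp,
          ← Complex.exp_add]
        congr 1
        simp only [Real.norm_eq_abs, sq_abs]
        push_cast
        rw [Finset.sum_mul, ← Finset.sum_neg_distrib, ← Finset.sum_neg_distrib,
          ← Finset.sum_add_distrib, ← Finset.sum_add_distrib]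
        refine Finset.sum_congr rfl fun i _ => ?_
        ring

theorem enorm_charFun_gaussianHyp_le (n m : ℕ) (w : EuclideanSpace ℝ (Fin (n + 1))) :
    ‖charFun (gaussianHyp (n + 1) m) w‖ₑ ≤
      ENNReal.ofReal ((Real.pi ^ 2 * (n + 1)) ^ ((n : ℝ) / 4)) * ‖w‖ₑ ^ (-((n : ℝ) / 2)) := by
  have hnorm : ∑ i : Fin n, w i.castSucc ^ 2 + w (Fin.last n) ^ 2 = ‖w‖ ^ 2 := by
    simp [EuclideanSpace.norm_sq_eq, Fin.sum_univ_castSucc]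
  have hle : ‖charFun (gaussianHyp (n + 1) m) w‖ ≤
      (Real.pi ^ 2 * (n + 1) / (1 + ‖w‖ ^ 2)) ^ ((n : ℝ) / 4) := by
    rw [charFun_gaussianHyp, ← hnorm]
    simpa only [Fintype.card_fin] using norm_integral_cexp_quadratic_phase_le
      (sq_nonneg (w (Fin.last n))) fun i : Fin n => by split_ifs <;> ring
  calc ‖charFun (gaussianHyp (n + 1) m) w‖ₑ
      ≤ ENNReal.ofReal ((Real.pi ^ 2 * (n + 1) / (1 + ‖w‖ ^ 2)) ^ ((n : ℝ) / 4)) := by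
        rw [← ofReal_norm]
        gcongr
    _ ≤ ENNReal.ofReal ((Real.pi ^ 2 * (n + 1)) ^ ((n : ℝ) / 4)) * ‖w‖ₑ ^ (-((n : ℝ) / 2)) := by
        rw [← ofReal_norm, show (n : ℝ) / 2 = 2 * (n / 4) by ring]
        exact ofReal_div_one_add_sq_rpow_le (by positivity) (norm_nonneg w) (by positivity)

/-! ### The averages over the truncated hyperbolic paraboloid -/

lemma norm_ftM {d : ℕ} (μ : Measure (EuclideanSpace ℝ (Fin d))) (ζ : EuclideanSpace ℝ (Fin d)) :
    ‖ftM μ ζ‖ = ‖charFun μ ζ‖ := by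
  have hconj : ftM μ ζ = charFun μ (-ζ) := by
    simp [ftM, charFun_apply, PiLp.inner_apply, mul_comm]
  rw [hconj, charFun_neg, RCLike.norm_conj]

lemma energy_eq_lintegral_edist {d : ℕ} (α : ℝ) (μ : Measure (EuclideanSpace ℝ (Fin d))) :
    energy α μ = ∫⁻ x, ∫⁻ y, edist x y ^ (-α) ∂μ ∂μ := by
  simp only [energy, edist_dist]

lemma sqrt_one_add_four_mul_sq_le {r : ℝ} (hr : r ^ 2 ≤ 1) :
    Real.sqrt (1 + 4 * r ^ 2) ≤ Real.sqrt 5 * Real.exp 1 * Real.exp (-r ^ 2) := by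
  rw [mul_assoc, ← Real.exp_add]
  calc Real.sqrt (1 + 4 * r ^ 2) ≤ Real.sqrt 5 := Real.sqrt_le_sqrt (by linarith)
    _ ≤ Real.sqrt 5 * Real.exp (1 + -r ^ 2) :=
      le_mul_of_one_le_right (by positivity) (Real.one_le_exp (by linarith))

theorem ofReal_hypAvg_le (d m : ℕ) (μ : Measure (EuclideanSpace ℝ (Fin d))) [IsFiniteMeasure μ]
    (R : ℝ) :
    ENNReal.ofReal (hypAvg d m μ R) ≤ ENNReal.ofReal (Real.sqrt 5 * Real.exp 1) *
      ∫⁻ ζ, ‖charFun μ (R • ζ)‖ₑ ^ 2 ∂gaussianHyp d m := by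
  have hpoint (ξ : EuclideanSpace ℝ (Fin (d - 1))) (hξ : ξ ∈ ball 0 1) :
      ‖‖ftM μ (R • hypLift d m ξ)‖ ^ 2 * Real.sqrt (1 + 4 * ‖ξ‖ ^ 2)‖ₑ ≤
        ENNReal.ofReal (Real.sqrt 5 * Real.exp 1) * (ENNReal.ofReal (Real.exp (-‖ξ‖ ^ 2)) *
          ‖charFun μ (R • hypLift d m ξ)‖ₑ ^ 2) := by
    have hξ' : ‖ξ‖ ^ 2 ≤ 1 := pow_le_one₀ (norm_nonneg ξ) (mem_ball_zero_iff.1 hξ).le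
    rw [Real.enorm_of_nonneg (by positivity), norm_ftM, ← ofReal_norm (charFun μ _),
      ← ENNReal.ofReal_pow (norm_nonneg _), ← ENNReal.ofReal_mul (by positivity),
      ← ENNReal.ofReal_mul (by positivity), ← mul_assoc, mul_comm]
    gcongr
    exact sqrt_one_add_four_mul_sq_le hξ'
  calc ENNReal.ofReal (hypAvg d m μ R)
      ≤ ‖hypAvg d m μ R‖ₑ := Real.ofReal_le_enorm _
    _ ≤ ∫⁻ ξ in ball 0 1, ‖‖ftM μ (R • hypLift d m ξ)‖ ^ 2 * Real.sqrt (1 + 4 * ‖ξ‖ ^ 2)‖ₑ :=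
      enorm_integral_le_lintegral_enorm _
    _ ≤ ∫⁻ ξ in ball 0 1, ENNReal.ofReal (Real.sqrt 5 * Real.exp 1) *
          (ENNReal.ofReal (Real.exp (-‖ξ‖ ^ 2)) * ‖charFun μ (R • hypLift d m ξ)‖ₑ ^ 2) :=
      setLIntegral_mono' measurableSet_ball hpoint
    _ ≤ ∫⁻ ξ, ENNReal.ofReal (Real.sqrt 5 * Real.exp 1) *
          (ENNReal.ofReal (Real.exp (-‖ξ‖ ^ 2)) * ‖charFun μ (R • hypLift d m ξ)‖ₑ ^ 2) :=
      setLIntegral_le_lintegral _ _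
    _ = _ := by
      rw [lintegral_const_mul _ (by fun_prop), lintegral_gaussianHyp d m (by fun_prop)]

theorem statement5_general (d m : ℕ) (hd : 1 ≤ d) (α β : ℝ) (hα : ((d : ℝ) - 1) / 2 ≤ α)
    (hβ : β ≤ ((d : ℝ) - 1) / 2) : decayBound d m α β := by
  obtain ⟨n, rfl⟩ := Nat.exists_eq_add_of_le' hd
  rw [Nat.cast_add_one, add_sub_cancel_right] at hα hβ
  set A : ℝ := Real.sqrt 5 * Real.exp 1
  set B : ℝ := (Real.pi ^ 2 * (n + 1)) ^ ((n : ℝ) / 4)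
  refine ⟨A * (B * 2 ^ (α - (n : ℝ) / 2)), by positivity, fun μ _ hμ R hR => ?_⟩
  have hR₀ : 0 < R := one_pos.trans hR
  calc ENNReal.ofReal (hypAvg (n + 1) m μ R)
      ≤ ENNReal.ofReal A * ∫⁻ ζ, ‖charFun μ (R • ζ)‖ₑ ^ 2 ∂gaussianHyp (n + 1) m :=
        ofReal_hypAvg_le (n + 1) m μ R
    _ ≤ ENNReal.ofReal A * (ENNReal.ofReal B * ENNReal.ofReal R ^ (-((n : ℝ) / 2)) *
          ENNReal.ofReal (2 * 1) ^ (α - (n : ℝ) / 2) * energy α μ) := by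
        rw [energy_eq_lintegral_edist]
        gcongr
        exact lintegral_enorm_charFun_smul_sq_le_of_decay (enorm_charFun_gaussianHyp_le n m)
          (mem_ae_iff.2 hμ) hα one_pos hR₀
    _ = ENNReal.ofReal (A * (B * 2 ^ (α - (n : ℝ) / 2)) * R ^ (-((n : ℝ) / 2))) * energy α μ := by
        rw [mul_one, ENNReal.ofReal_rpow_of_pos hR₀, ENNReal.ofReal_rpow_of_pos two_pos,
          ← ENNReal.ofReal_mul (by positivity), ← ENNReal.ofReal_mul (by positivity), ← mul_assoc,
          ← ENNReal.ofReal_mul (by positivity)]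
        congr 2
        ring
    _ ≤ ENNReal.ofReal (A * (B * 2 ^ (α - (n : ℝ) / 2)) * R ^ (-β)) * energy α μ := by
        gcongr
        exact hR.le

/-- if `(d-1)/2 <= a <= (d+1)/2` (and `a < d`), then for every `0 < b < (d-1)/2`
the decay estimate holds, i.e. `beta(a, H_m^{d-1}) >= (d-1)/2`. -/
theorem statement5 (d m : ℕ) (hd : 3 ≤ d) (hm1 : 1 ≤ m) (hm2 : 2 * m ≤ d - 1)
    (α : ℝ) (hα1 : ((d : ℝ) - 1) / 2 ≤ α) (hα2 : α ≤ ((d : ℝ) + 1) / 2) (hαd : α < d)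
    (β : ℝ) (hβ0 : 0 < β) (hβ : β < ((d : ℝ) - 1) / 2) :
    decayBound d m α β :=
  statement5_general d m (by omega) α β hα1 hβ.le
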